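/- arXiv:2512.02903 — 2 statements merged into one kernel-verified Lean document; each statement's English description precedes it below -/
import Mathlib

section
/- For all indices i, j ∈ {1,2,3}, the Laplace–Runge–Lenz vector transforms as a vector under rotations in the Poisson sense: {A_i, L_j}(r,v) = Σ_k ε_{ijk} A_k(r,v) for all (r,v) with r ≠ 0. -/
/-!
The function `L_j` generates the rotations about the `j`-th axis. Since `L_j = e_j · (r × v)`,
its gradients are `∇_v L_j = e_j × r` and `∇_r L_j = -(e_j × v)`, so `{F, L_j}` is the derivative
of `F` at `(r, v)` in the direction `(e_j × r, e_j × v)`. The expansion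
`A = (v · v) r - (r · v) v - (κ / ‖r‖) r` writes `A` through `r`, `v` and the rotation invariants
`v · v`, `r · v`, `‖r‖`, whose derivatives in that direction vanish (`inner_axisCross_self`,
`inner_axisCross_comm`). Hence `{A_i, L_j} = (e_j × A)_i`, which is `∑ₖ ε_{ijk} A_k`.
-/

noncomputable section

/-- Physical 3-space. -/
abbrev E3 : Type := EuclideanSpace ℝ (Fin 3)

/-- Build a vector in `E3` from its components. -/
def toE3 (f : Fin 3 → ℝ) : E3 := (EuclideanSpace.equiv (Fin 3) ℝ).symm f

/-- Cross product in `ℝ³`. -/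
def cross (a b : E3) : E3 :=
  toE3 ![a 1 * b 2 - a 2 * b 1, a 2 * b 0 - a 0 * b 2, a 0 * b 1 - a 1 * b 0]

/-- Dot product in `ℝ³`. -/
def dot (a b : E3) : ℝ := ∑ i, a i * b i

/-- Gradient in the `r` variable of a function on phase space. -/
def gradR (F : E3 × E3 → ℝ) (p : E3 × E3) : E3 := gradient (fun x => F (x, p.2)) p.1

/-- Gradient in the `v` variable of a function on phase space. -/
def gradV (F : E3 × E3 → ℝ) (p : E3 × E3) : E3 := gradient (fun y => F (p.1, y)) p.2

/-- Poisson bracket of two functions on phase space. -/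
def pb (F G : E3 × E3 → ℝ) (p : E3 × E3) : ℝ :=
  dot (gradR F p) (gradV G p) - dot (gradR G p) (gradV F p)

/-- Energy `E(r,v) = (1/2)‖v‖² − κ/‖r‖`. -/
def energy (κ : ℝ) (p : E3 × E3) : ℝ := (1/2) * ‖p.2‖^2 - κ / ‖p.1‖

/-- Angular momentum `L(r,v) = r × v`. -/
def angMom (p : E3 × E3) : E3 := cross p.1 p.2

/-- Laplace–Runge–Lenz vector `A(r,v) = v × L − κ r/‖r‖`. -/
def lrl (κ : ℝ) (p : E3 × E3) : E3 := cross p.2 (angMom p) - (κ / ‖p.1‖) • p.1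

/-- LRL direction vector `Θ = A/‖A‖`. -/
def lrlDir (κ : ℝ) (p : E3 × E3) : E3 := ‖lrl κ p‖⁻¹ • lrl κ p

/-- Levi-Civita symbol `ε_{ijk}` on indices in `{0,1,2}`. -/
def eps (i j k : Fin 3) : ℝ :=
  (((j : ℕ) : ℝ) - ((i : ℕ) : ℝ)) * (((k : ℕ) : ℝ) - ((i : ℕ) : ℝ))
    * (((k : ℕ) : ℝ) - ((j : ℕ) : ℝ)) / 2

/-- The vector `e_j × x`, the infinitesimal rotation of `x` about the `j`-th coordinate axis. -/
def axisCross (j : Fin 3) (x : E3) : E3 := cross (EuclideanSpace.single j 1) x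

lemma toE3_apply (f : Fin 3 → ℝ) (i : Fin 3) : toE3 f i = f i := rfl

lemma dot_eq_inner (a b : E3) : dot a b = inner ℝ a b := by
  simp [dot, PiLp.inner_apply, mul_comm]

lemma inner_axisCross_self (j : Fin 3) (x : E3) : inner ℝ x (axisCross j x) = 0 := by
  fin_cases j <;>
    simp [axisCross, cross, toE3_apply, PiLp.inner_apply, Fin.sum_univ_three] <;> ring

lemma inner_axisCross_comm (j : Fin 3) (x y : E3) :
    inner ℝ x (axisCross j y) = -inner ℝ y (axisCross j x) := by
  fin_cases j <;>
    simp [axisCross, cross, toE3_apply, PiLp.inner_apply, Fin.sum_univ_three] <;> ring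

lemma sum_eps_mul (i j : Fin 3) (x : E3) : ∑ k, eps i j k * x k = axisCross j x i := by
  fin_cases i <;> fin_cases j <;>
    simp [axisCross, cross, toE3_apply, eps, Fin.sum_univ_three] <;> norm_num

lemma angMom_apply (j : Fin 3) (x y : E3) : angMom (x, y) j = inner ℝ (axisCross j x) y := by
  fin_cases j <;>
    simp [angMom, axisCross, cross, toE3_apply, PiLp.inner_apply, Fin.sum_univ_three] <;> ring

lemma angMom_apply' (j : Fin 3) (x y : E3) :
    angMom (x, y) j = inner ℝ (-axisCross j y) x := by
  rw [angMom_apply, real_inner_comm, inner_axisCross_comm, inner_neg_left, real_inner_comm]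

lemma lrl_apply (κ : ℝ) (i : Fin 3) (x y : E3) :
    lrl κ (x, y) i = inner ℝ y y * x i - inner ℝ x y * y i - κ * (‖x‖⁻¹ * x i) := by
  fin_cases i <;>
    simp [lrl, angMom, cross, toE3_apply, PiLp.inner_apply, Fin.sum_univ_three,
      -inner_self_eq_norm_sq_to_K] <;> ring

lemma gradient_inner_right (a y : E3) : gradient (fun x => inner ℝ a x) y = a := by
  refine HasGradientAt.gradient ?_
  rw [hasGradientAt_iff_hasFDerivAt]
  exact (InnerProductSpace.toDual ℝ E3 a).hasFDerivAt

lemma hasFDerivAt_coord (i : Fin 3) (x : E3) :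
    HasFDerivAt (fun x : E3 => x i) (EuclideanSpace.proj i : E3 →L[ℝ] ℝ) x :=
  (EuclideanSpace.proj i : E3 →L[ℝ] ℝ).hasFDerivAt

/-- A rotation of `r` leaves `‖r‖` fixed, so only the coordinate `r_i` contributes to the
derivative of `r_i / ‖r‖` in a direction `w ⟂ r`. -/
lemma fderiv_lrl_left (κ : ℝ) (i : Fin 3) {r : E3} (hr : r ≠ 0) (v w : E3)
    (hw : inner ℝ r w = 0) :
    fderiv ℝ (fun x => lrl κ (x, v) i) r w
      = inner ℝ v v * w i - inner ℝ v w * v i - κ * (‖r‖⁻¹ * w i) := by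
  have hn : DifferentiableAt ℝ (fun x : E3 => ‖x‖) r := differentiableAt_id.norm ℝ hr
  have hN : fderiv ℝ (fun x : E3 => ‖x‖) r w = 0 := by
    -- differentiate `‖x‖ ^ 2 = ⟪x, x⟫` and divide by `2 ‖r‖`
    have h1 := hn.hasFDerivAt.pow 2
    have h2 := (hasStrictFDerivAt_norm_sq r).hasFDerivAt
    have h3 := congrArg (fun T : E3 →L[ℝ] ℝ => T w) (h1.unique h2)
    simpa [hw, hr] using h3
  have hI := (hasDerivAt_inv (norm_ne_zero_iff.mpr hr)).comp_hasFDerivAt r hn.hasFDerivAt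
  have hin : HasFDerivAt (fun x : E3 => inner ℝ v x) (innerSL ℝ v) r := (innerSL ℝ v).hasFDerivAt
  have h := (((hasFDerivAt_coord i r).const_mul (inner ℝ v v)).sub (hin.mul_const (v i))).sub
    ((hI.mul (hasFDerivAt_coord i r)).const_mul κ)
  have hf : (fun x => lrl κ (x, v) i) = fun x : E3 =>
      inner ℝ v v * x i - inner ℝ v x * v i - κ * (‖x‖⁻¹ * x i) := by
    funext x
    rw [lrl_apply, real_inner_comm v x]
  rw [hf]
  refine (congrArg (fun T : E3 →L[ℝ] ℝ => T w) (HasFDerivAt.fderiv h)).trans ?_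
  simp [hN, mul_comm]

lemma fderiv_lrl_right (κ : ℝ) (i : Fin 3) (r v w : E3) (hw : inner ℝ v w = 0) :
    fderiv ℝ (fun y => lrl κ (r, y) i) v w
      = -(inner ℝ r w * v i + inner ℝ r v * w i) := by
  have hn := (hasStrictFDerivAt_norm_sq v).hasFDerivAt
  have hin : HasFDerivAt (fun x : E3 => inner ℝ r x) (innerSL ℝ r) v := (innerSL ℝ r).hasFDerivAt
  have h := ((hn.mul_const (r i)).sub (hin.mul (hasFDerivAt_coord i v))).sub_const
    (κ * (‖r‖⁻¹ * r i))
  have hf : (fun y => lrl κ (r, y) i) = fun y : E3 =>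
      ‖y‖ ^ 2 * r i - inner ℝ r y * y i - κ * (‖r‖⁻¹ * r i) := by
    funext y
    rw [lrl_apply, real_inner_self_eq_norm_sq]
  rw [hf]
  refine (congrArg (fun T : E3 →L[ℝ] ℝ => T w) (HasFDerivAt.fderiv h)).trans ?_
  simp [hw]
  ring

lemma axisCross_lrl (κ : ℝ) (i j : Fin 3) (r v : E3) :
    axisCross j (lrl κ (r, v)) i = inner ℝ v v * axisCross j r i - inner ℝ r v * axisCross j v i
      - κ * (‖r‖⁻¹ * axisCross j r i) := by
  fin_cases i <;> fin_cases j <;>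
    simp [axisCross, cross, toE3_apply, lrl_apply] <;> ring

/-- The bracket with `L_j` is the derivative along the infinitesimal rotation about axis `j`. -/
lemma pb_angMom (F : E3 × E3 → ℝ) (j : Fin 3) (r v : E3) :
    pb F (fun p => angMom p j) (r, v)
      = fderiv ℝ (fun x => F (x, v)) r (axisCross j r)
        + fderiv ℝ (fun y => F (r, y)) v (axisCross j v) := by
  have hV : gradV (fun p => angMom p j) (r, v) = axisCross j r := by
    simp only [gradV, angMom_apply, gradient_inner_right]
  have hR : gradR (fun p => angMom p j) (r, v) = -axisCross j v := by
    simp only [gradR, angMom_apply', gradient_inner_right]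
  rw [pb, hV, hR, dot_eq_inner, dot_eq_inner, inner_neg_left, real_inner_comm (gradV F (r, v)),
    gradR, gradV, inner_gradient_left, inner_gradient_left, sub_neg_eq_add]

/-- The LRL vector transforms as a vector under rotations in the Poisson sense:
`{A_i, L_j}(r,v) = Σ_k ε_{ijk} A_k(r,v)` for all `(r,v)` with `r ≠ 0`. -/
theorem poisson_lrl_angMom (κ : ℝ) (hκ : 0 < κ) (i j : Fin 3)
    (r v : E3) (hr : r ≠ 0) :
    pb (fun p => lrl κ p i) (fun p => angMom p j) (r, v)
      = ∑ k, eps i j k * lrl κ (r, v) k := by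
  rw [pb_angMom, sum_eps_mul, axisCross_lrl,
    fderiv_lrl_left κ i hr v _ (inner_axisCross_self j r),
    fderiv_lrl_right κ i r v _ (inner_axisCross_self j v), inner_axisCross_comm j v r]
  ring
end
end

section
/- Let κ > 0, let E ∈ ℝ, ρ > 0, s ∈ {1, −1}, and let L₀, Θ₀ ∈ ℝ³ satisfy L₀ ≠ 0, ‖Θ₀‖ = 1, Θ₀ · L₀ = 0, 2ρ²E + 2κρ − ‖L₀‖² ≥ 0, and κ² + 2E‖L₀‖² > 0. Set a = √(κ² + 2E‖L₀‖²), B = √(2ρ²E + 2κρ − ‖L₀‖²), and define r* = a⁻¹ ( (‖L₀‖² − κρ) Θ₀ + s B (L₀ × Θ₀) ), v* = a⁻¹ ( −s κ B ρ⁻¹ Θ₀ + (2E + κ/ρ) (L₀ × Θ₀) ). Then ‖r*‖ = ρ, (1/2)‖v*‖² − κ/‖r*‖ = E, r* × v* = L₀, and v* × L₀ − κ r*/‖r*‖ = a Θ₀; that is, the point (r*, v*) has prescribed radius ρ, energy E, angular momentum L₀, LRL direction Θ₀, and LRL magnitude a. -/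
/-!
The vectors `Θ₀` and `w = L₀ × Θ₀` are orthogonal, of lengths `1` and `‖L₀‖`, and
`Θ₀ × w = L₀`, `Θ₀ × L₀ = -w`, `w × L₀ = ‖L₀‖² Θ₀`. Since `r*` and `v*` are explicit
combinations of `Θ₀` and `w`, each claim becomes a scalar identity in the coefficients
(`norm_sq_comb`, `cross_comb_comb`, `cross_comb_left`). These identities follow from
`s² = 1`, `a² = κ² + 2E‖L₀‖²` and `B² = 2ρ²E + 2κρ - ‖L₀‖²`.
-/

noncomputable section

lemma cross_apply_zero (a b : E3) : cross a b 0 = a 1 * b 2 - a 2 * b 1 := rfl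

lemma cross_apply_one (a b : E3) : cross a b 1 = a 2 * b 0 - a 0 * b 2 := rfl

lemma cross_apply_two (a b : E3) : cross a b 2 = a 0 * b 1 - a 1 * b 0 := rfl

lemma norm_sq_coords (a : E3) : ‖a‖ ^ 2 = a 0 ^ 2 + a 1 ^ 2 + a 2 ^ 2 := by
  simp [EuclideanSpace.norm_sq_eq, Fin.sum_univ_three]

lemma dot_coords (a b : E3) : dot a b = a 0 * b 0 + a 1 * b 1 + a 2 * b 2 := by
  simp [dot, Fin.sum_univ_three]

/-- Pythagoras in the orthogonal frame `Θ`, `L × Θ`. -/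
lemma norm_sq_comb {L Θ : E3} (hΘ : ‖Θ‖ = 1) (hp : dot Θ L = 0) (x y : ℝ) :
    ‖x • Θ + y • cross L Θ‖ ^ 2 = x ^ 2 + y ^ 2 * ‖L‖ ^ 2 := by
  have h1 : Θ 0 ^ 2 + Θ 1 ^ 2 + Θ 2 ^ 2 = 1 := by rw [← norm_sq_coords, hΘ, one_pow]
  rw [dot_coords] at hp
  simp only [norm_sq_coords, PiLp.add_apply, PiLp.smul_apply, smul_eq_mul, cross_apply_zero,
    cross_apply_one, cross_apply_two]
  -- Lagrange's identity `‖L × Θ‖² = ‖L‖² ‖Θ‖² - (Θ · L)²` gives the `y ^ 2` terms.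
  linear_combination (x ^ 2 + y ^ 2 * (L 0 ^ 2 + L 1 ^ 2 + L 2 ^ 2)) * h1
    - y ^ 2 * (Θ 0 * L 0 + Θ 1 * L 1 + Θ 2 * L 2) * hp

/-- Uses `Θ × (L × Θ) = L` for a unit vector `Θ` orthogonal to `L`. -/
lemma cross_comb_comb {L Θ : E3} (hΘ : ‖Θ‖ = 1) (hp : dot Θ L = 0) (c x y x' y' : ℝ) :
    cross (c • (x • Θ + y • cross L Θ)) (c • (x' • Θ + y' • cross L Θ))
      = (c ^ 2 * (x * y' - y * x')) • L := by
  have h1 : Θ 0 ^ 2 + Θ 1 ^ 2 + Θ 2 ^ 2 = 1 := by rw [← norm_sq_coords, hΘ, one_pow]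
  rw [dot_coords] at hp
  ext i
  fin_cases i <;>
  simp only [Fin.zero_eta, Fin.mk_one, Fin.reduceFinMk, PiLp.add_apply, PiLp.smul_apply,
    smul_eq_mul, cross_apply_zero, cross_apply_one, cross_apply_two]
  · linear_combination c ^ 2 * (x * y' - y * x') * (L 0 * h1 - Θ 0 * hp)
  · linear_combination c ^ 2 * (x * y' - y * x') * (L 1 * h1 - Θ 1 * hp)
  · linear_combination c ^ 2 * (x * y' - y * x') * (L 2 * h1 - Θ 2 * hp)

/-- Uses `(L × Θ) × L = ‖L‖² Θ` for `Θ` orthogonal to `L`. -/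
lemma cross_comb_left {L Θ : E3} (hp : dot Θ L = 0) (c x y : ℝ) :
    cross (c • (x • Θ + y • cross L Θ)) L
      = (c * y * ‖L‖ ^ 2) • Θ - (c * x) • cross L Θ := by
  rw [dot_coords] at hp
  rw [norm_sq_coords]
  ext i
  fin_cases i <;>
  simp only [Fin.zero_eta, Fin.mk_one, Fin.reduceFinMk, PiLp.add_apply, PiLp.sub_apply,
    PiLp.smul_apply, smul_eq_mul, cross_apply_zero, cross_apply_one, cross_apply_two]
  · linear_combination (-(c * y * L 0)) * hp
  · linear_combination (-(c * y * L 1)) * hp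
  · linear_combination (-(c * y * L 2)) * hp

/-- Reconstruction of a phase-space point from prescribed radius `ρ`, energy
`E`, angular momentum `L₀`, LRL direction `Θ₀`, and sign `s` of the radial
velocity: the point `(r*, v*)` defined by the stated formulas has radius `ρ`,
energy `E`, angular momentum `L₀`, and LRL vector `a Θ₀` with
`a = √(κ² + 2E‖L₀‖²)`. -/
theorem phase_point_reconstruction (κ : ℝ) (hκ : 0 < κ) (E ρ s : ℝ)
    (hρ : 0 < ρ) (hs : s = 1 ∨ s = -1) (L₀ Θ₀ : E3)
    (hL₀ : L₀ ≠ 0) (hΘ₀ : ‖Θ₀‖ = 1) (hperp : dot Θ₀ L₀ = 0)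
    (hB : 0 ≤ 2 * ρ^2 * E + 2 * κ * ρ - ‖L₀‖^2)
    (ha : 0 < κ^2 + 2 * E * ‖L₀‖^2)
    (a B : ℝ) (hadef : a = Real.sqrt (κ^2 + 2 * E * ‖L₀‖^2))
    (hBdef : B = Real.sqrt (2 * ρ^2 * E + 2 * κ * ρ - ‖L₀‖^2))
    (rs vs : E3)
    (hrs : rs = a⁻¹ • ((‖L₀‖^2 - κ * ρ) • Θ₀ + (s * B) • cross L₀ Θ₀))
    (hvs : vs = a⁻¹ • ((-(s * κ * B / ρ)) • Θ₀ + (2 * E + κ / ρ) • cross L₀ Θ₀)) :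
    ‖rs‖ = ρ ∧
    (1/2) * ‖vs‖^2 - κ / ‖rs‖ = E ∧
    cross rs vs = L₀ ∧
    cross vs L₀ - (κ / ‖rs‖) • rs = a • Θ₀ := by
  have ha0 : 0 < a := hadef ▸ Real.sqrt_pos.mpr ha
  have ha2 : a ^ 2 = κ ^ 2 + 2 * E * ‖L₀‖ ^ 2 := by rw [hadef, Real.sq_sqrt ha.le]
  have hB2 : B ^ 2 = 2 * ρ ^ 2 * E + 2 * κ * ρ - ‖L₀‖ ^ 2 := by rw [hBdef, Real.sq_sqrt hB]
  have hs2 : s ^ 2 = 1 := by rcases hs with rfl | rfl <;> norm_num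
  have hsB : (s * B) ^ 2 = 2 * ρ ^ 2 * E + 2 * κ * ρ - ‖L₀‖ ^ 2 := by
    rw [mul_pow, hs2, one_mul, hB2]
  have hr : ‖rs‖ = ρ := by
    refine (sq_eq_sq₀ (norm_nonneg _) hρ.le).mp ?_
    rw [hrs, norm_smul, mul_pow, norm_sq_comb hΘ₀ hperp, Real.norm_eq_abs, sq_abs, hsB]
    field_simp
    rw [ha2]
    ring
  refine ⟨hr, ?_, ?_, ?_⟩
  · have hv : ‖vs‖ ^ 2 = 2 * E + 2 * κ / ρ := by
      rw [hvs, norm_smul, mul_pow, norm_sq_comb hΘ₀ hperp, Real.norm_eq_abs, sq_abs]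
      field_simp
      rw [ha2]
      linear_combination κ ^ 2 * hsB
    rw [hr, hv]
    ring
  · rw [hrs, hvs, cross_comb_comb hΘ₀ hperp]
    have hc : a⁻¹ ^ 2 * ((‖L₀‖ ^ 2 - κ * ρ) * (2 * E + κ / ρ)
        - s * B * (-(s * κ * B / ρ))) = 1 := by
      field_simp
      rw [ha2]
      linear_combination κ * hsB
    rw [hc, one_smul]
  · rw [hr, hvs, cross_comb_left hperp, hrs]
    -- The components along `L₀ × Θ₀` cancel, leaving `a² / a` along `Θ₀`.
    match_scalars
    · field_simp
      rw [ha2]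
      ring
    · field_simp
      ring
end
end
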